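/- Let μ⁻, μ⁺ be probability measures on ℝ^d with compact supports X⁻, X⁺ and let c : X⁻ × X⁺ → ℝ be continuous. Then the function ε ↦ v_ε is real-analytic on the open interval (0,+∞). -/

import Mathlib

open MeasureTheory Real Set Filter Classical
open scoped ENNReal NNReal Topology

noncomputable section

/-- Relative entropy (Kullback–Leibler divergence) `Ent(γ | q)`, with values in `EReal`:
it equals `∫ ρ log ρ dq` if `γ = ρ·q` (with `ρ log ρ` integrable) and `+∞` otherwise. -/
def Ent {α : Type*} [MeasurableSpace α] (γ q : Measure α) : EReal :=
  if γ ≪ q ∧ Integrable (fun x => ((γ.rnDeriv q) x).toReal * Real.log ((γ.rnDeriv q) x).toReal) q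
  then ((∫ x, ((γ.rnDeriv q) x).toReal * Real.log ((γ.rnDeriv q) x).toReal ∂q : ℝ) : EReal)
  else ⊤

/-- Entropic optimal transport cost
`v_ε = inf { ∫ c dγ + ε Ent(γ | μ⁻ ⊗ μ⁺) : γ coupling of μ⁻ and μ⁺ }`. -/
def entCost {α β : Type*} [MeasurableSpace α] [MeasurableSpace β]
    (μm : Measure α) (μp : Measure β) (c : α × β → ℝ) (ε : ℝ) : EReal :=
  sInf {v : EReal | ∃ γ : Measure (α × β), IsProbabilityMeasure γ ∧ γ.fst = μm ∧ γ.snd = μp ∧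
    v = ((∫ p, c p ∂γ : ℝ) : EReal) + (ε : EReal) * Ent γ (μm.prod μp)}

/-- Support of a measure: the set of points all of whose open neighbourhoods have
positive measure. -/
def msupport {α : Type*} [TopologicalSpace α] [MeasurableSpace α] (μ : Measure α) : Set α :=
  {x | ∀ U : Set α, IsOpen U → x ∈ U → μ U ≠ 0}

/-!
By Gibbs' variational inequality, if continuous potentials `f`, `g` make both marginals of the
density `exp (f ⊕ g - c / ε)` with respect to `μ⁻ ⊗ μ⁺` equal to `1`, then
`v_ε = ε (∫ f dμ⁻ + ∫ g dμ⁺)`. So it suffices to find such potentials depending analytically on the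
cost `k = c / ε`, as an element of the Banach space of continuous functions. The implicit function
theorem provides them near any `k` at which they exist: the linearized system is, up to the
constants `(a, -a)`, invertible because the composition of the two conditional expectation operators
has a spectral gap. The same argument shows that the set of `t ∈ [0, 1]` such that `t c / ε` has
potentials is open; it is closed by the Arzelà–Ascoli theorem and contains `0`, so potentials exist
for every cost.
-/

lemma isCompact_setOf_abs_le_and_dist_le {X E : Type*} [TopologicalSpace X]
    [PseudoMetricSpace E] (φ : C(X, E)) (R : ℝ) :
    IsCompact {f : C(X, ℝ) | (∀ x, |f x| ≤ R) ∧
      ∀ x x', dist (f x) (f x') ≤ dist (φ x) (φ x')} := by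
  have hdom (x : X) : Tendsto (fun x' => dist (φ x) (φ x')) (𝓝 x) (𝓝 0) := by
    simpa using (continuous_const.dist φ.continuous).tendsto (f := fun x' => dist (φ x) (φ x')) x
  refine ArzelaAscoli.isCompact_of_equicontinuous _ ?_ fun x =>
    Metric.equicontinuousAt_of_continuity_modulus _ (hdom x) _ (.of_forall fun x' f => f.2.2 x x')
  have himage : ContinuousMap.toFun '' {f : C(X, ℝ) | (∀ x, |f x| ≤ R) ∧
      ∀ x x', dist (f x) (f x') ≤ dist (φ x) (φ x')} =
      (Set.univ.pi fun _ => Icc (-R) R) ∩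
        {f : X → ℝ | ∀ x x', dist (f x) (f x') ≤ dist (φ x) (φ x')} := by
    refine Subset.antisymm ?_ fun f hf => ⟨⟨f, ?_⟩, ⟨fun x => abs_le.2 (hf.1 x trivial), hf.2⟩, rfl⟩
    · rintro _ ⟨f, hf, rfl⟩
      exact ⟨fun x _ => abs_le.1 (hf.1 x), hf.2⟩
    · exact continuous_iff_continuousAt.2 fun x => tendsto_iff_dist_tendsto_zero.2 <|
        squeeze_zero (fun _ => dist_nonneg) (fun x' => (dist_comm _ _).trans_le (hf.2 x x'))
          (hdom x)
  rw [himage]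
  refine (isCompact_univ_pi fun _ => isCompact_Icc).inter_right ?_
  simp only [ofPred_forall]
  exact isClosed_iInter fun x => isClosed_iInter fun x' =>
    isClosed_le (by fun_prop) continuous_const

lemma dist_curry_smul_le {X Y : Type*} [TopologicalSpace X] [TopologicalSpace Y] [CompactSpace Y]
    (c : C(X × Y, ℝ)) {t : ℝ} (ht : |t| ≤ 1) (x x' : X) :
    dist ((t • c).curry x) ((t • c).curry x') ≤ dist (c.curry x) (c.curry x') :=
  (dist_smul₀ t (c.curry x) (c.curry x')).trans_le (mul_le_of_le_one_left dist_nonneg ht)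

section CompactSpaces

variable {X Y : Type*} [TopologicalSpace X] [CompactSpace X] [TopologicalSpace Y] [CompactSpace Y]

section Integration

variable [MeasurableSpace Y] [OpensMeasurableSpace Y]

lemma integrable_of_compactSpace (ν : Measure Y) [IsFiniteMeasure ν] {f : Y → ℝ}
    (hf : Continuous f) : Integrable f ν :=
  hf.integrable_of_hasCompactSupport (.of_compactSpace f)

variable (ν : Measure Y) [IsProbabilityMeasure ν]

/-- Expectation under `ν`, as a continuous functional on `C(Y, ℝ)`. -/
def expectationCLM : C(Y, ℝ) →L[ℝ] ℝ :=
  LinearMap.mkContinuous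
    { toFun := fun f => ∫ y, f y ∂ν
      map_add' := fun f g => integral_add (integrable_of_compactSpace ν f.continuous)
          (integrable_of_compactSpace ν g.continuous)
      map_smul' := fun a f => integral_const_mul a f } 1 fun f => by
    simpa using norm_integral_le_of_norm_le_const (μ := ν) (.of_forall f.norm_coe_le_norm)

@[simp] lemma expectationCLM_apply (f : C(Y, ℝ)) : expectationCLM ν f = ∫ y, f y ∂ν := rfl

/-- Integration over the second variable, `F ↦ ∫ F (·, y) dν(y)`. -/
def fiberIntegral : C(X × Y, ℝ) →L[ℝ] C(X, ℝ) :=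
  LinearMap.mkContinuous
    { toFun := fun F => ⟨fun x => ∫ y, F (x, y) ∂ν,
        (expectationCLM ν).continuous.comp F.curry.continuous⟩
      map_add' := fun F G => ContinuousMap.ext fun x =>
        map_add (expectationCLM ν) (F.curry x) (G.curry x)
      map_smul' := fun a F => ContinuousMap.ext fun x => integral_const_mul a fun y => F (x, y) }
    1 fun F => by
    refine (ContinuousMap.norm_le _ (by positivity)).2 fun x => ?_
    change ‖∫ y, F (x, y) ∂ν‖ ≤ 1 * ‖F‖
    simpa using norm_integral_le_of_norm_le_const (μ := ν)
      (.of_forall fun y => F.norm_coe_le_norm (x, y))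

/-- The integral operator `h ↦ ∫ k (·, y) h y dν(y)` with kernel `k`. -/
def kernelOp (k : C(X × Y, ℝ)) : C(Y, ℝ) →L[ℝ] C(X, ℝ) :=
  fiberIntegral ν ∘L ContinuousLinearMap.mul ℝ C(X × Y, ℝ) k ∘L
    ContinuousMap.compCLM ℝ ℝ ContinuousMap.snd

@[simp] lemma kernelOp_apply (k : C(X × Y, ℝ)) (h : C(Y, ℝ)) (x : X) :
    kernelOp ν k h x = ∫ y, k (x, y) * h y ∂ν := rfl

lemma norm_kernelOp_le {k : C(X × Y, ℝ)} {M : ℝ} (hM : 0 ≤ M) (hk : ∀ p, 0 ≤ k p)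
    (hkM : ∀ x, ∫ y, k (x, y) ∂ν ≤ M) : ‖kernelOp ν k‖ ≤ M := by
  refine ContinuousLinearMap.opNorm_le_bound _ hM fun h =>
    (ContinuousMap.norm_le _ (by positivity)).2 fun x => ?_
  calc ‖∫ y, k (x, y) * h y ∂ν‖
      ≤ ∫ y, k (x, y) * ‖h‖ ∂ν := by
        refine norm_integral_le_of_norm_le (integrable_of_compactSpace ν (by fun_prop))
          (.of_forall fun y => ?_)
        rw [norm_mul, norm_of_nonneg (hk _)]
        exact mul_le_mul_of_nonneg_left (h.norm_coe_le_norm y) (hk _)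
    _ = (∫ y, k (x, y) ∂ν) * ‖h‖ := integral_mul_const _ _
    _ ≤ M * ‖h‖ := by gcongr; exact hkM x

end Integration

section SpectralGap

variable [MeasurableSpace X] [OpensMeasurableSpace X] [MeasurableSpace Y] [OpensMeasurableSpace Y]
  (μ : Measure X) [IsProbabilityMeasure μ] (ν : Measure Y) [IsProbabilityMeasure ν]

lemma integral_integral_swap_of_compactSpace (F : C(X × Y, ℝ)) :
    ∫ x, ∫ y, F (x, y) ∂ν ∂μ = ∫ y, ∫ x, F (x, y) ∂μ ∂ν :=
  integral_integral_swap_of_hasCompactSupport (f := fun x y => F (x, y)) F.continuous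
    (.of_compactSpace _)

/-- The averaging operator `h ↦ ∫ h dμ` from `C(X, ℝ)` to its constant functions. -/
def averageOp : C(X, ℝ) →L[ℝ] C(X, ℝ) := (expectationCLM μ).smulRight 1

@[simp] lemma averageOp_apply (h : C(X, ℝ)) (x : X) : averageOp μ h x = ∫ x, h x ∂μ := by
  simp [averageOp]

/-- Doeblin's argument: since `δ ≤ p`, the kernel `p - δ` is still nonnegative, and its mass is
`1 - δ`. -/
lemma norm_kernelOp_comp_sub_averageOp_le {p : C(X × Y, ℝ)} {δ : ℝ} (hδ : 0 ≤ δ)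
    (hp : ∀ z, δ ≤ p z) (hpX : ∀ x, ∫ y, p (x, y) ∂ν = 1) (hpY : ∀ y, ∫ x, p (x, y) ∂μ = 1) :
    ‖kernelOp ν p ∘L kernelOp μ (p.comp .prodSwap) - δ • averageOp μ‖ ≤ 1 - δ := by
  set q : C(Y × X, ℝ) := p.comp .prodSwap - .const _ δ with hq
  have hq_int (y : Y) : ∫ x, q (y, x) ∂μ = 1 - δ := by
    have hint := integrable_of_compactSpace μ (f := fun x => p (x, y)) (by fun_prop)
    simp [hq, integral_sub hint, hpY]
  have hfactor : kernelOp ν p ∘L kernelOp μ (p.comp .prodSwap) - δ • averageOp μ =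
      kernelOp ν p ∘L kernelOp μ q := by
    ext h x
    have hQ : kernelOp μ q h = kernelOp μ (p.comp .prodSwap) h - .const Y (δ * ∫ x, h x ∂μ) := by
      ext y
      simp only [hq, kernelOp_apply, ContinuousMap.sub_apply, ContinuousMap.const_apply, sub_mul]
      rw [integral_sub (integrable_of_compactSpace μ (by fun_prop))
        (integrable_of_compactSpace μ (by fun_prop)), integral_const_mul]
    have hP (a : ℝ) : kernelOp ν p (.const Y a) x = a := by
      simp [integral_mul_const, hpX]
    simp [-kernelOp_apply, hQ, hP]
  have hP : ‖kernelOp ν p‖ ≤ 1 := norm_kernelOp_le ν zero_le_one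
    (fun z => hδ.trans (hp z)) fun x => (hpX x).le
  have hQ : ‖kernelOp μ q‖ ≤ 1 - δ := by
    obtain ⟨y⟩ : Nonempty Y := ν.nonempty_of_neZero
    have hq0 : ∀ z, 0 ≤ q z := fun z => sub_nonneg.2 (hp _)
    refine norm_kernelOp_le μ ?_ hq0 fun y => (hq_int y).le
    exact hq_int y ▸ integral_nonneg fun x => hq0 (y, x)
  calc _ = ‖kernelOp ν p ∘L kernelOp μ q‖ := by rw [hfactor]
    _ ≤ ‖kernelOp ν p‖ * ‖kernelOp μ q‖ := ContinuousLinearMap.opNorm_comp_le _ _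
    _ ≤ 1 * (1 - δ) := by gcongr
    _ = 1 - δ := one_mul _

end SpectralGap

/-- Eliminating `v` leaves the operator `1 - (P ∘ Q - J)` in the variable `u`. -/
lemma isInvertible_of_norm_comp_sub_lt_one {E F : Type*} [NormedAddCommGroup E] [NormedSpace ℝ E]
    [CompleteSpace E] [NormedAddCommGroup F] [NormedSpace ℝ F] {D : E × F →L[ℝ] E × F}
    {P : F →L[ℝ] E} {Q : E →L[ℝ] F} {J : E →L[ℝ] E}
    (hD : ∀ u v, D (u, v) = (u + P v + J u, Q u + v)) (h : ‖P ∘L Q - J‖ < 1) :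
    D.IsInvertible := by
  let U : E ≃L[ℝ] E := ContinuousLinearEquiv.unitsEquiv ℝ E (Units.oneSub _ h)
  let lower : (E × F) ≃L[ℝ] E × F := U.skewProd (.refl ℝ F) Q
  let upper : (E × F) ≃L[ℝ] E × F := (ContinuousLinearEquiv.prodComm ℝ E F).trans <|
    ((ContinuousLinearEquiv.refl ℝ F).skewProd (.refl ℝ E) P).trans (.prodComm ℝ F E)
  refine ⟨lower.trans upper, ContinuousLinearMap.ext fun ⟨u, v⟩ => ?_⟩
  have hU : U u = u - (P (Q u) - J u) := rfl
  refine Prod.ext ?_ (by simp [lower, upper, hD, add_comm])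
  simp only [lower, upper, hU, hD, ContinuousLinearEquiv.coe_coe, ContinuousLinearEquiv.trans_apply,
    ContinuousLinearEquiv.skewProd_apply, ContinuousLinearEquiv.prodComm_apply,
    ContinuousLinearEquiv.refl_apply, Prod.swap_prod_mk, map_add]
  abel

/-- A pair of Schrödinger potentials for the cost `k`: the density `exp (f ⊕ g - k)` with respect
to `μ ⊗ ν` has both marginals equal to `1`. -/
structure IsSchrodingerPotential {α β : Type*} [MeasurableSpace α] [MeasurableSpace β]
    (μ : Measure α) (ν : Measure β) (k : α × β → ℝ) (f : α → ℝ) (g : β → ℝ) : Prop where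
  integral_snd : ∀ x, ∫ y, exp (f x + g y - k (x, y)) ∂ν = 1
  integral_fst : ∀ y, ∫ x, exp (f x + g y - k (x, y)) ∂μ = 1

lemma exp_continuousMap_apply (f : C(X, ℝ)) (x : X) : NormedSpace.exp f x = exp (f x) := by
  rw [Real.exp_eq_exp_ℝ]
  exact NormedSpace.map_exp (ContinuousMap.evalAlgHom ℝ ℝ x) (continuous_eval_const x) f

section SchrodingerMap

/-- The map `(f, g) ↦ f ⊕ g`, where `(f ⊕ g) (x, y) = f x + g y`. -/
def directSum : C(X, ℝ) × C(Y, ℝ) →L[ℝ] C(X × Y, ℝ) :=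
  (ContinuousMap.compCLM ℝ ℝ ContinuousMap.fst).coprod
    (ContinuousMap.compCLM ℝ ℝ ContinuousMap.snd)

@[simp] lemma directSum_apply (u : C(X, ℝ) × C(Y, ℝ)) (z : X × Y) :
    directSum u z = u.1 z.1 + u.2 z.2 := rfl

variable [MeasurableSpace X] [OpensMeasurableSpace X] [MeasurableSpace Y] [OpensMeasurableSpace Y]
  (μ : Measure X) [IsProbabilityMeasure μ] (ν : Measure Y) [IsProbabilityMeasure ν]

/-- The pair of marginals of a continuous density with respect to `μ ⊗ ν`. -/
def marginals : C(X × Y, ℝ) →L[ℝ] C(X, ℝ) × C(Y, ℝ) :=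
  (fiberIntegral ν).prod (fiberIntegral μ ∘L ContinuousMap.compCLM ℝ ℝ .prodSwap)

@[simp] lemma fst_marginals_apply (F : C(X × Y, ℝ)) (x : X) :
    (marginals μ ν F).1 x = ∫ y, F (x, y) ∂ν := rfl

@[simp] lemma snd_marginals_apply (F : C(X × Y, ℝ)) (y : Y) :
    (marginals μ ν F).2 y = ∫ x, F (x, y) ∂μ := rfl

lemma isSchrodingerPotential_iff_marginals_exp {k : C(X × Y, ℝ)} {f : C(X, ℝ)} {g : C(Y, ℝ)} :
    IsSchrodingerPotential μ ν k f g ↔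
      marginals μ ν (NormedSpace.exp (directSum (f, g) - k)) = (1, 1) := by
  simp only [Prod.ext_iff, ContinuousMap.ext_iff, fst_marginals_apply, snd_marginals_apply,
    exp_continuousMap_apply]
  exact ⟨fun h => ⟨h.integral_snd, h.integral_fst⟩, fun h => ⟨h.1, h.2⟩⟩

/-- The marginals of `exp (f ⊕ g - k)` as a function of `(k, f, g)`. The term `δ ∫ f dμ` breaks the
invariance under `(f, g) ↦ (f + a, g - a)`. -/
def schrodingerMap (δ : ℝ) (z : C(X × Y, ℝ) × C(X, ℝ) × C(Y, ℝ)) : C(X, ℝ) × C(Y, ℝ) :=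
  marginals μ ν (NormedSpace.exp (directSum z.2 - z.1)) + (δ • averageOp μ z.2.1, 0)

lemma contDiff_schrodingerMap (δ : ℝ) : ContDiff ℝ ⊤ (schrodingerMap (X := X) (Y := Y) μ ν δ) := by
  have hexp : ContDiff ℝ ⊤ (NormedSpace.exp : C(X × Y, ℝ) → C(X × Y, ℝ)) :=
    contDiff_iff_contDiffAt.2 fun x => (NormedSpace.exp_analytic (𝕂 := ℝ) x).contDiffAt
  unfold schrodingerMap
  fun_prop

lemma fderiv_schrodingerMap_comp_inr (δ : ℝ) (k : C(X × Y, ℝ)) (u : C(X, ℝ) × C(Y, ℝ)) :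
    fderiv ℝ (schrodingerMap μ ν δ) (k, u) ∘L .inr ℝ _ _ =
      marginals μ ν ∘L ContinuousLinearMap.mul ℝ _ (NormedSpace.exp (directSum u - k)) ∘L
        directSum + .inl ℝ _ _ ∘L (δ • averageOp μ) ∘L .fst ℝ _ _ := by
  have hmap := ((contDiff_schrodingerMap μ ν δ).differentiable (by simp) (k, u)).hasFDerivAt.comp u
    (hasFDerivAt_prodMk_right k u)
  have hexp := (marginals μ ν).hasFDerivAt.comp u <| (hasFDerivAt_exp (𝕂 := ℝ)).comp u <|
    (directSum (X := X) (Y := Y)).hasFDerivAt.sub_const k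
  have hgauge := (ContinuousLinearMap.inl ℝ C(X, ℝ) C(Y, ℝ) ∘L (δ • averageOp μ) ∘L
    .fst ℝ _ _).hasFDerivAt (x := u)
  exact hmap.unique (hexp.add hgauge)

variable {μ ν}

lemma IsSchrodingerPotential.of_schrodingerMap_eq {δ a : ℝ} {k : C(X × Y, ℝ)} {f : C(X, ℝ)}
    {g : C(Y, ℝ)} (h : schrodingerMap μ ν δ (k, f, g) = (.const X a, 1)) :
    IsSchrodingerPotential μ ν k f g := by
  rw [isSchrodingerPotential_iff_marginals_exp]
  set p := NormedSpace.exp (directSum (f, g) - k) with hp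
  have hX (x : X) : ∫ y, p (x, y) ∂ν = a - δ * ∫ x, f x ∂μ := by
    simpa [schrodingerMap, ← hp, eq_sub_iff_add_eq] using DFunLike.congr_fun (congrArg Prod.fst h) x
  have hY (y : Y) : ∫ x, p (x, y) ∂μ = 1 := by
    simpa [schrodingerMap, ← hp] using DFunLike.congr_fun (congrArg Prod.snd h) y
  have hmass : a - δ * ∫ x, f x ∂μ = 1 := by
    simpa [hX, hY] using integral_integral_swap_of_compactSpace μ ν p
  exact Prod.ext (ContinuousMap.ext fun x => (hX x).trans hmass) (ContinuousMap.ext hY)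

lemma IsSchrodingerPotential.exists_isInvertible_fderiv {k : C(X × Y, ℝ)} {f : C(X, ℝ)}
    {g : C(Y, ℝ)} (h : IsSchrodingerPotential μ ν k f g) :
    ∃ δ : ℝ, (fderiv ℝ (schrodingerMap μ ν δ) (k, f, g) ∘L .inr ℝ _ _).IsInvertible := by
  set p := NormedSpace.exp (directSum (f, g) - k) with hp
  set δ := exp (-‖directSum (f, g) - k‖) with hδ
  have hpδ (z : X × Y) : δ ≤ p z := by
    rw [hp, exp_continuousMap_apply]
    exact exp_le_exp.2 (ContinuousMap.neg_norm_le_apply _ z)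
  rw [isSchrodingerPotential_iff_marginals_exp] at h
  have hpX (x : X) : ∫ y, p (x, y) ∂ν = 1 := DFunLike.congr_fun (congrArg Prod.fst h) x
  have hpY (y : Y) : ∫ x, p (x, y) ∂μ = 1 := DFunLike.congr_fun (congrArg Prod.snd h) y
  have hgap : ‖kernelOp ν p ∘L kernelOp μ (p.comp .prodSwap) - δ • averageOp μ‖ < 1 :=
    (norm_kernelOp_comp_sub_averageOp_le μ ν (exp_pos _).le hpδ hpX hpY).trans_lt
      (sub_lt_self 1 (exp_pos _))
  refine ⟨δ, ?_⟩
  rw [fderiv_schrodingerMap_comp_inr, ← hp]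
  refine isInvertible_of_norm_comp_sub_lt_one (fun u v => Prod.ext ?_ ?_) hgap
  · ext x
    have := integral_add (μ := ν) (integrable_of_compactSpace ν (f := fun y => p (x, y) * u x)
      (by fun_prop)) (integrable_of_compactSpace ν (f := fun y => p (x, y) * v y) (by fun_prop))
    simp [mul_add, this, integral_mul_const, hpX]
  · ext y
    have := integral_add (μ := μ) (integrable_of_compactSpace μ (f := fun x => p (x, y) * u x)
      (by fun_prop)) (integrable_of_compactSpace μ (f := fun x => p (x, y) * v y) (by fun_prop))
    simp [mul_add, this, integral_mul_const, hpY]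

theorem IsSchrodingerPotential.exists_analyticAt {k₀ : C(X × Y, ℝ)} {f₀ : C(X, ℝ)} {g₀ : C(Y, ℝ)}
    (h : IsSchrodingerPotential μ ν k₀ f₀ g₀) :
    ∃ (f : C(X × Y, ℝ) → C(X, ℝ)) (g : C(X × Y, ℝ) → C(Y, ℝ)), AnalyticAt ℝ f k₀ ∧
      AnalyticAt ℝ g k₀ ∧ ∀ᶠ k : C(X × Y, ℝ) in 𝓝 k₀, IsSchrodingerPotential μ ν k (f k) (g k) := by
  obtain ⟨δ, hδ⟩ := h.exists_isInvertible_fderiv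
  have hsmooth := (contDiff_schrodingerMap μ ν δ).contDiffAt (x := (k₀, f₀, g₀))
  set φ := hsmooth.implicitFunction (by simp) hδ
  have hφ : AnalyticAt ℝ φ k₀ := (hsmooth.contDiffAt_implicitFunction (by simp) hδ).analyticAt
  refine ⟨fun k => (φ k).1, fun k => (φ k).2, analyticAt_fst.comp hφ, analyticAt_snd.comp hφ, ?_⟩
  filter_upwards [hsmooth.eventually_apply_implicitFunction (by simp) hδ] with k hk
  refine .of_schrodingerMap_eq (δ := δ) (a := 1 + δ * ∫ x, f₀ x ∂μ) (hk.trans ?_)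
  rw [schrodingerMap, (isSchrodingerPotential_iff_marginals_exp μ ν).1 h]
  refine Prod.ext (ContinuousMap.ext fun x => ?_) (ContinuousMap.ext fun y => ?_) <;> simp

end SchrodingerMap

section Estimates

variable {α β : Type*} [MeasurableSpace α] [MeasurableSpace β] {μ : Measure α} {ν : Measure β}
  {k : α × β → ℝ} {f : α → ℝ} {g : β → ℝ}

lemma nonneg_of_integral_exp_eq_one {u v : α → ℝ} {ω : ℝ} (hu : ∫ x, exp (u x) ∂μ = 1)
    (hv : ∫ x, exp (v x) ∂μ = 1) (h : ∀ x, u x ≤ v x + ω) : 0 ≤ ω := by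
  rw [← one_le_exp_iff]
  calc 1 = ∫ x, exp (u x) ∂μ := hu.symm
    _ ≤ ∫ x, exp (v x) * exp ω ∂μ :=
      integral_mono (integrable_of_integral_eq_one hu)
        ((integrable_of_integral_eq_one hv).mul_const _) fun x =>
          (exp_le_exp.2 (h x)).trans_eq (exp_add _ _)
    _ = exp ω := by rw [integral_mul_const, hv, one_mul]

namespace IsSchrodingerPotential

lemma symm (h : IsSchrodingerPotential μ ν k f g) :
    IsSchrodingerPotential ν μ (k ∘ Prod.swap) g f where
  integral_snd y := by simpa [add_comm] using h.integral_fst y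
  integral_fst x := by simpa [add_comm] using h.integral_snd x

lemma sub_const (h : IsSchrodingerPotential μ ν k f g) (a : ℝ) :
    IsSchrodingerPotential μ ν k (fun x => f x - a) (fun y => g y + a) where
  integral_snd x := by simpa using h.integral_snd x
  integral_fst y := by simpa using h.integral_fst y

lemma sub_le (h : IsSchrodingerPotential μ ν k f g) {x x' : α} {ω : ℝ}
    (hω : ∀ y, k (x, y) - k (x', y) ≤ ω) : f x - f x' ≤ ω := by
  have := nonneg_of_integral_exp_eq_one (ω := f x' - f x + ω) (h.integral_snd x')
    (h.integral_snd x) fun y => by linarith [hω y]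
  linarith

lemma abs_snd_le [IsProbabilityMeasure μ] (h : IsSchrodingerPotential μ ν k f g) {R M : ℝ}
    (hf : ∀ x, |f x| ≤ R) (hk : ∀ p, |k p| ≤ M) (y : β) : |g y| ≤ R + M := by
  have hone : ∫ _ : α, exp 0 ∂μ = 1 := by simp
  have hlower := nonneg_of_integral_exp_eq_one (ω := g y + (R + M)) (h.integral_fst y) hone
    fun x => by linarith [(abs_le.1 (hf x)).2, (abs_le.1 (hk (x, y))).1]
  have hupper := nonneg_of_integral_exp_eq_one (ω := R + M - g y) hone (h.integral_fst y)
    fun x => by linarith [(abs_le.1 (hf x)).1, (abs_le.1 (hk (x, y))).2]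
  exact abs_le.2 ⟨by linarith, by linarith⟩

lemma dist_fst_le {Y : Type*} [TopologicalSpace Y] [CompactSpace Y] [MeasurableSpace Y]
    [TopologicalSpace α] {ν : Measure Y} {k : C(α × Y, ℝ)} {g : Y → ℝ}
    (h : IsSchrodingerPotential μ ν k f g) (x x' : α) :
    dist (f x) (f x') ≤ dist (k.curry x) (k.curry x') := by
  have hk (z z' : α) (y : Y) : k (z, y) - k (z', y) ≤ dist (k.curry z) (k.curry z') :=
    (le_abs_self _).trans (ContinuousMap.dist_apply_le_dist (f := k.curry z) (g := k.curry z') y)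
  exact abs_sub_le_iff.2 ⟨h.sub_le (hk x x'), (h.sub_le (hk x' x)).trans_eq (dist_comm _ _)⟩

end IsSchrodingerPotential

end Estimates

section Existence

lemma exists_isCompact_potentials [MeasurableSpace X] [MeasurableSpace Y] (μ : Measure X)
    [IsProbabilityMeasure μ] (ν : Measure Y) (c : C(X × Y, ℝ)) :
    ∃ K : Set (C(X, ℝ) × C(Y, ℝ)), IsCompact K ∧
      ∀ t ∈ Icc (0 : ℝ) 1, ∀ (f : C(X, ℝ)) (g : C(Y, ℝ)),
        IsSchrodingerPotential μ ν (t • c : C(X × Y, ℝ)) f g →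
          ∃ u ∈ K, IsSchrodingerPotential μ ν (t • c : C(X × Y, ℝ)) u.1 u.2 := by
  obtain ⟨x₀⟩ : Nonempty X := μ.nonempty_of_neZero
  refine ⟨_, (isCompact_setOf_abs_le_and_dist_le c.curry (2 * ‖c‖)).prod
    (isCompact_setOf_abs_le_and_dist_le (c.comp .prodSwap).curry (2 * ‖c‖ + ‖c‖)),
    fun t ht f g h => ?_⟩
  have ht1 : |t| ≤ 1 := abs_le.2 ⟨by linarith [ht.1], ht.2⟩
  have hc (z : X × Y) : |(t • c) z| ≤ ‖c‖ :=
    ((t • c).norm_coe_le_norm z).trans <| (norm_smul t c).trans_le <|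
      mul_le_of_le_one_left (norm_nonneg c) ht1
  have hf (x : X) : |f x - f x₀| ≤ 2 * ‖c‖ := abs_sub_le_iff.2
    ⟨h.sub_le fun y => by linarith [abs_le.1 (hc (x, y)), abs_le.1 (hc (x₀, y))],
      h.sub_le fun y => by linarith [abs_le.1 (hc (x, y)), abs_le.1 (hc (x₀, y))]⟩
  have hnorm : IsSchrodingerPotential μ ν (t • c : C(X × Y, ℝ))
      (f - .const X (f x₀) : C(X, ℝ)) (g + .const Y (f x₀) : C(Y, ℝ)) :=
    h.sub_const (f x₀)
  refine ⟨(f - .const X (f x₀), g + .const Y (f x₀)),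
    ⟨⟨hf, fun x x' => ?_⟩, hnorm.abs_snd_le hf hc, fun y y' => ?_⟩, hnorm⟩
  · exact (hnorm.dist_fst_le x x').trans (dist_curry_smul_le c ht1 x x')
  · exact (hnorm.symm.dist_fst_le (k := (t • c).comp .prodSwap) y y').trans
      (dist_curry_smul_le (c.comp .prodSwap) ht1 y y')

variable [MeasurableSpace X] [OpensMeasurableSpace X] [MeasurableSpace Y] [OpensMeasurableSpace Y]
  (μ : Measure X) [IsProbabilityMeasure μ] (ν : Measure Y) [IsProbabilityMeasure ν]

lemma isClosed_setOf_isSchrodingerPotential :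
    IsClosed {z : C(X × Y, ℝ) × C(X, ℝ) × C(Y, ℝ) |
      IsSchrodingerPotential μ ν z.1 z.2.1 z.2.2} := by
  simp only [isSchrodingerPotential_iff_marginals_exp]
  exact isClosed_eq ((marginals μ ν).continuous.comp (NormedSpace.exp_continuous.comp
    (by fun_prop))) continuous_const

theorem exists_isSchrodingerPotential (c : C(X × Y, ℝ)) :
    ∃ (f : C(X, ℝ)) (g : C(Y, ℝ)), IsSchrodingerPotential μ ν c f g := by
  set S : Set ℝ := {t | ∃ (f : C(X, ℝ)) (g : C(Y, ℝ)),
    IsSchrodingerPotential μ ν (t • c : C(X × Y, ℝ)) f g} with hS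
  have hclosed : IsClosed (S ∩ Icc 0 1) := by
    obtain ⟨K, hK, hSK⟩ := exists_isCompact_potentials μ ν c
    let Z : Set (ℝ × C(X, ℝ) × C(Y, ℝ)) :=
      {z | IsSchrodingerPotential μ ν (z.1 • c : C(X × Y, ℝ)) z.2.1 z.2.2}
    have hZ : IsClosed Z := (isClosed_setOf_isSchrodingerPotential μ ν).preimage
      (f := fun z : ℝ × C(X, ℝ) × C(Y, ℝ) => (z.1 • c, z.2)) (by fun_prop)
    have hproj : S ∩ Icc 0 1 = Prod.fst '' (Icc (0 : ℝ) 1 ×ˢ K ∩ Z) := by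
      refine Subset.antisymm ?_ ?_
      · rintro t ⟨⟨f, g, h⟩, ht⟩
        obtain ⟨u, hu, hu'⟩ := hSK t ht f g h
        exact ⟨(t, u), ⟨⟨ht, hu⟩, hu'⟩, rfl⟩
      · rintro _ ⟨⟨t, f, g⟩, ⟨⟨ht, -⟩, h⟩, rfl⟩
        exact ⟨⟨f, g, h⟩, ht⟩
    rw [hproj]
    exact (((isCompact_Icc.prod hK).inter_right hZ).image continuous_fst).isClosed
  have hopen : ∀ t ∈ S, S ∈ 𝓝 t := by
    rintro t ⟨f, g, h⟩
    obtain ⟨φ, ψ, -, -, hφψ⟩ := IsSchrodingerPotential.exists_analyticAt (k₀ := t • c) h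
    have hcont : ContinuousAt (fun t : ℝ => t • c) t := by fun_prop
    filter_upwards [hcont.eventually hφψ] with s hs using ⟨_, _, hs⟩
  have hsub : Icc 0 1 ⊆ S := hclosed.Icc_subset_of_forall_mem_nhdsWithin
    ⟨0, 0, by constructor <;> simp⟩ fun t ht => mem_nhdsWithin_of_mem_nhds (hopen t ht.1)
  simpa [hS] using hsub (right_mem_Icc.2 zero_le_one)

end Existence

end CompactSpaces

section EntropicDuality

variable {α β : Type*} [MeasurableSpace α] [MeasurableSpace β]

/-- This is nonnegativity of the relative entropy of `γ` with respect to `q.tilted φ`. -/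
lemma integral_sub_log_integral_exp_le_ent {γ q : Measure α} [IsProbabilityMeasure γ]
    [IsProbabilityMeasure q] {φ : α → ℝ} (hφ : Integrable φ γ)
    (hexp : Integrable (fun x => exp (φ x)) q) :
    ((∫ x, φ x ∂γ - log (∫ x, exp (φ x) ∂q) : ℝ) : EReal) ≤ Ent γ q := by
  rw [Ent]
  split_ifs with h
  · obtain ⟨hac, hlog⟩ := h
    have hllr := (integrable_rnDeriv_mul_log_iff hac).1 hlog
    have := isProbabilityMeasure_tilted hexp
    have hnonneg := InformationTheory.integral_llr_add_sub_measure_univ_nonneg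
      (hac.trans (absolutelyContinuous_tilted hexp)) (integrable_llr_tilted_right hac hφ hllr hexp)
    rw [integral_llr_tilted_right hac hφ hexp hllr, probReal_univ, probReal_univ] at hnonneg
    rw [integral_rnDeriv_mul_log hac, EReal.coe_le_coe_iff]
    linarith
  · exact le_top

lemma ent_tilted {q : Measure α} [IsProbabilityMeasure q] {φ : α → ℝ}
    (hexp : Integrable (fun x => exp (φ x)) q) (hφ : Integrable φ (q.tilted φ)) :
    Ent (q.tilted φ) q = ((∫ x, φ x ∂q.tilted φ - log (∫ x, exp (φ x) ∂q) : ℝ) : EReal) := by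
  have := isProbabilityMeasure_tilted hexp
  have hac := tilted_absolutelyContinuous q φ
  have hllr : llr (q.tilted φ) q =ᵐ[q.tilted φ] fun x => φ x - log (∫ x, exp (φ x) ∂q) :=
    hac.ae_le (log_rnDeriv_tilted_left_self hexp)
  have hint : Integrable (llr (q.tilted φ) q) (q.tilted φ) :=
    (hφ.sub (integrable_const _)).congr hllr.symm
  rw [Ent, if_pos ⟨hac, (integrable_rnDeriv_mul_log_iff hac).2 hint⟩, integral_rnDeriv_mul_log hac,
    integral_congr_ae hllr, integral_sub hφ (integrable_const _), integral_const, probReal_univ,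
    one_smul]

variable {μ : Measure α} {ν : Measure β}

section Couplings

lemma fst_withDensity_prod [SFinite μ] [SFinite ν] {p : α × β → ℝ≥0∞}
    (hp : AEMeasurable p (μ.prod ν)) (h : ∀ x, ∫⁻ y, p (x, y) ∂ν = 1) :
    ((μ.prod ν).withDensity p).fst = μ := by
  ext s hs
  rw [Measure.fst_apply hs, withDensity_apply _ (measurable_fst hs), ← Set.prod_univ,
    setLIntegral_prod _ hp.restrict]
  simp [h]

lemma snd_withDensity_prod [SFinite μ] [SFinite ν] {p : α × β → ℝ≥0∞}
    (hp : AEMeasurable p (μ.prod ν)) (h : ∀ y, ∫⁻ x, p (x, y) ∂μ = 1) :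
    ((μ.prod ν).withDensity p).snd = ν := by
  ext s hs
  rw [Measure.snd_apply hs, withDensity_apply _ (measurable_snd hs), ← Set.univ_prod,
    setLIntegral_prod_symm _ hp.restrict]
  simp [h]

lemma integrable_add_of_coupling {γ : Measure (α × β)} (hμ : γ.fst = μ) (hν : γ.snd = ν)
    {f : α → ℝ} {g : β → ℝ} (hf : Integrable f μ) (hg : Integrable g ν) :
    Integrable (fun z => f z.1 + g z.2) γ := by
  subst hμ hν
  exact (hf.comp_measurable measurable_fst).add (hg.comp_measurable measurable_snd)

lemma integral_add_of_coupling {γ : Measure (α × β)} (hμ : γ.fst = μ) (hν : γ.snd = ν)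
    {f : α → ℝ} {g : β → ℝ} (hf : Integrable f μ) (hg : Integrable g ν) :
    ∫ z, f z.1 + g z.2 ∂γ = ∫ x, f x ∂μ + ∫ y, g y ∂ν := by
  subst hμ hν
  rw [Measure.fst, Measure.snd, integral_map measurable_fst.aemeasurable hf.aestronglyMeasurable,
    integral_map measurable_snd.aemeasurable hg.aestronglyMeasurable]
  exact integral_add (hf.comp_measurable measurable_fst) (hg.comp_measurable measurable_snd)

lemma ae_mem_prod_of_coupling {γ : Measure (α × β)} (hμ : γ.fst = μ) (hν : γ.snd = ν)
    {s : Set α} {t : Set β} (hs : ∀ᵐ x ∂μ, x ∈ s) (ht : ∀ᵐ y ∂ν, y ∈ t) :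
    ∀ᵐ z ∂γ, z ∈ s ×ˢ t := by
  subst hμ hν
  exact (ae_of_ae_map measurable_fst.aemeasurable hs).and
    (ae_of_ae_map measurable_snd.aemeasurable ht)

lemma entCost_congr {c c' : α × β → ℝ} {s : Set α} {t : Set β} (hs : ∀ᵐ x ∂μ, x ∈ s)
    (ht : ∀ᵐ y ∂ν, y ∈ t) (h : EqOn c c' (s ×ˢ t)) (ε : ℝ) :
    entCost μ ν c ε = entCost μ ν c' ε := by
  refine congrArg sInf (Set.ext fun v => exists_congr fun γ => ?_)
  refine and_congr_right fun _ => and_congr_right fun hμ => and_congr_right fun hν => ?_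
  rw [integral_congr_ae ((ae_mem_prod_of_coupling hμ hν hs ht).mono fun z hz => h hz)]

end Couplings

namespace IsSchrodingerPotential

variable [IsProbabilityMeasure μ] [IsProbabilityMeasure ν]

section Density

variable {k : α × β → ℝ} {f : α → ℝ} {g : β → ℝ}

lemma integrable_exp (h : IsSchrodingerPotential μ ν k f g)
    (hφ : AEMeasurable (fun z => f z.1 + g z.2 - k z) (μ.prod ν)) :
    Integrable (fun z => exp (f z.1 + g z.2 - k z)) (μ.prod ν) := by
  refine (integrable_prod_iff hφ.exp.aestronglyMeasurable).2
    ⟨.of_forall fun x => integrable_of_integral_eq_one (h.integral_snd x), ?_⟩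
  simp only [norm_of_nonneg (exp_nonneg _), h.integral_snd]
  exact integrable_const 1

lemma integral_exp (h : IsSchrodingerPotential μ ν k f g)
    (hφ : AEMeasurable (fun z => f z.1 + g z.2 - k z) (μ.prod ν)) :
    ∫ z, exp (f z.1 + g z.2 - k z) ∂μ.prod ν = 1 := by
  simp [integral_prod _ (h.integrable_exp hφ), h.integral_snd]

lemma tilted_eq_withDensity (h : IsSchrodingerPotential μ ν k f g)
    (hφ : AEMeasurable (fun z => f z.1 + g z.2 - k z) (μ.prod ν)) :
    (μ.prod ν).tilted (fun z => f z.1 + g z.2 - k z) =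
      (μ.prod ν).withDensity fun z => ENNReal.ofReal (exp (f z.1 + g z.2 - k z)) := by
  simp only [Measure.tilted, h.integral_exp hφ, div_one]

lemma fst_tilted (h : IsSchrodingerPotential μ ν k f g)
    (hφ : AEMeasurable (fun z => f z.1 + g z.2 - k z) (μ.prod ν)) :
    ((μ.prod ν).tilted fun z => f z.1 + g z.2 - k z).fst = μ := by
  rw [h.tilted_eq_withDensity hφ]
  refine fst_withDensity_prod hφ.exp.ennreal_ofReal fun x => ?_
  rw [← ofReal_integral_eq_lintegral_ofReal (integrable_of_integral_eq_one (h.integral_snd x))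
    (.of_forall fun y => (exp_pos _).le), h.integral_snd, ENNReal.ofReal_one]

lemma snd_tilted (h : IsSchrodingerPotential μ ν k f g)
    (hφ : AEMeasurable (fun z => f z.1 + g z.2 - k z) (μ.prod ν)) :
    ((μ.prod ν).tilted fun z => f z.1 + g z.2 - k z).snd = ν := by
  rw [h.tilted_eq_withDensity hφ]
  refine snd_withDensity_prod hφ.exp.ennreal_ofReal fun y => ?_
  rw [← ofReal_integral_eq_lintegral_ofReal (integrable_of_integral_eq_one (h.integral_fst y))
    (.of_forall fun x => (exp_pos _).le), h.integral_fst, ENNReal.ofReal_one]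

end Density

/-- The Gibbs inequality for `φ = f ⊕ g - ε⁻¹ c` bounds the cost of every coupling from below, and
the tilt of `μ ⊗ ν` by `φ`, itself a coupling, attains the bound. -/
theorem entCost_eq {c : α × β → ℝ} {f : α → ℝ} {g : β → ℝ} {ε M : ℝ} (hε : 0 < ε)
    (hc : Measurable c) (hM : ∀ z, |c z| ≤ M) (hf : Integrable f μ) (hg : Integrable g ν)
    (h : IsSchrodingerPotential μ ν (ε⁻¹ • c) f g) :
    entCost μ ν c ε = ((ε * (∫ x, f x ∂μ + ∫ y, g y ∂ν) : ℝ) : EReal) := by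
  set φ : α × β → ℝ := fun z => f z.1 + g z.2 - (ε⁻¹ • c) z with hφ
  have hcγ (γ : Measure (α × β)) [IsProbabilityMeasure γ] : Integrable (ε⁻¹ • c) γ :=
    (Integrable.of_bound hc.aestronglyMeasurable M (.of_forall hM)).smul _
  have hφγ (γ : Measure (α × β)) [IsProbabilityMeasure γ] (hμ : γ.fst = μ) (hν : γ.snd = ν) :
      Integrable φ γ := (integrable_add_of_coupling hμ hν hf hg).sub (hcγ γ)
  have hcost (γ : Measure (α × β)) [IsProbabilityMeasure γ] (hμ : γ.fst = μ) (hν : γ.snd = ν) :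
      ∫ z, c z ∂γ + ε * ∫ z, φ z ∂γ = ε * (∫ x, f x ∂μ + ∫ y, g y ∂ν) := by
    rw [hφ, integral_sub (integrable_add_of_coupling hμ hν hf hg) (hcγ γ),
      integral_add_of_coupling hμ hν hf hg]
    simp only [Pi.smul_apply, smul_eq_mul, integral_const_mul]
    field_simp
    ring
  have hφm : AEMeasurable φ (μ.prod ν) :=
    (hφγ _ Measure.fst_prod Measure.snd_prod).aemeasurable
  have hexp := h.integrable_exp hφm
  have hlog : log (∫ z, exp (φ z) ∂μ.prod ν) = 0 := by rw [h.integral_exp hφm, log_one]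
  refine le_antisymm (sInf_le ⟨(μ.prod ν).tilted φ, isProbabilityMeasure_tilted hexp,
    h.fst_tilted hφm, h.snd_tilted hφm, ?_⟩) (le_sInf ?_)
  · have := isProbabilityMeasure_tilted hexp
    rw [ent_tilted hexp (hφγ _ (h.fst_tilted hφm) (h.snd_tilted hφm)), hlog, sub_zero,
      ← hcost _ (h.fst_tilted hφm) (h.snd_tilted hφm), EReal.coe_add, EReal.coe_mul]
  · rintro _ ⟨γ, hγ, hμ, hν, rfl⟩
    have hgibbs := integral_sub_log_integral_exp_le_ent (hφγ γ hμ hν) hexp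
    rw [hlog, sub_zero] at hgibbs
    rw [← hcost γ hμ hν, EReal.coe_add, EReal.coe_mul]
    gcongr

end IsSchrodingerPotential

end EntropicDuality

lemma IsSchrodingerPotential.of_map {α β X Y : Type*} [MeasurableSpace α] [MeasurableSpace β]
    [MeasurableSpace X] [MeasurableSpace Y] {μ : Measure α} {ν : Measure β} {r : α → X} {s : β → Y}
    {k : X × Y → ℝ} {f : X → ℝ} {g : Y → ℝ} (hr : AEMeasurable r μ) (hs : AEMeasurable s ν)
    (h : IsSchrodingerPotential (μ.map r) (ν.map s) k f g) :
    IsSchrodingerPotential μ ν (k ∘ Prod.map r s) (f ∘ r) (g ∘ s) where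
  integral_snd x := by
    rw [← h.integral_snd (r x), integral_map hs
      (integrable_of_integral_eq_one (h.integral_snd (r x))).aestronglyMeasurable]
    rfl
  integral_fst y := by
    rw [← h.integral_fst (s y), integral_map hr
      (integrable_of_integral_eq_one (h.integral_fst (s y))).aestronglyMeasurable]
    rfl

section Analyticity

variable {α β X Y : Type*} [MeasurableSpace α] [MeasurableSpace β]
  [TopologicalSpace X] [CompactSpace X] [MeasurableSpace X] [OpensMeasurableSpace X]
  [TopologicalSpace Y] [CompactSpace Y] [MeasurableSpace Y] [OpensMeasurableSpace Y]
  [OpensMeasurableSpace (X × Y)] {μ : Measure α} [IsProbabilityMeasure μ] {ν : Measure β}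
  [IsProbabilityMeasure ν] {r : α → X} {s : β → Y}

lemma IsSchrodingerPotential.entCost_comp_eq (hr : Measurable r) (hs : Measurable s)
    {c : C(X × Y, ℝ)} {f : C(X, ℝ)} {g : C(Y, ℝ)} {ε : ℝ} (hε : 0 < ε)
    (h : IsSchrodingerPotential (μ.map r) (ν.map s) (ε⁻¹ • c : C(X × Y, ℝ)) f g) :
    entCost μ ν (c ∘ Prod.map r s) ε =
      ((ε * (∫ x, f x ∂μ.map r + ∫ y, g y ∂ν.map s) : ℝ) : EReal) := by
  have := Measure.isProbabilityMeasure_map (μ := μ) hr.aemeasurable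
  have := Measure.isProbabilityMeasure_map (μ := ν) hs.aemeasurable
  have hf := integrable_of_compactSpace (μ.map r) f.continuous
  have hg := integrable_of_compactSpace (ν.map s) g.continuous
  rw [integral_map hr.aemeasurable hf.aestronglyMeasurable,
    integral_map hs.aemeasurable hg.aestronglyMeasurable]
  exact IsSchrodingerPotential.entCost_eq hε (c.continuous.measurable.comp (hr.prodMap hs))
    (fun z => c.norm_coe_le_norm _) (hf.comp_measurable hr) (hg.comp_measurable hs)
    (h.of_map hr.aemeasurable hs.aemeasurable)

theorem analyticAt_toReal_entCost (hr : Measurable r) (hs : Measurable s) (c : C(X × Y, ℝ))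
    {ε₀ : ℝ} (hε₀ : 0 < ε₀) :
    AnalyticAt ℝ (fun ε => (entCost μ ν (c ∘ Prod.map r s) ε).toReal) ε₀ := by
  have := Measure.isProbabilityMeasure_map (μ := μ) hr.aemeasurable
  have := Measure.isProbabilityMeasure_map (μ := ν) hs.aemeasurable
  obtain ⟨f₀, g₀, h₀⟩ := exists_isSchrodingerPotential (μ.map r) (ν.map s) (ε₀⁻¹ • c)
  obtain ⟨f, g, hf, hg, hfg⟩ := h₀.exists_analyticAt
  have hscale : AnalyticAt ℝ (fun ε : ℝ => ε⁻¹ • c) ε₀ :=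
    (analyticAt_id.inv hε₀.ne').smul analyticAt_const
  have hvalue : AnalyticAt ℝ (fun ε => ε * (expectationCLM (μ.map r) (f (ε⁻¹ • c)) +
      expectationCLM (ν.map s) (g (ε⁻¹ • c)))) ε₀ :=
    analyticAt_id.mul <|
      (((expectationCLM (μ.map r)).analyticAt _).comp (hf.fun_comp_of_eq hscale rfl)).add
        (((expectationCLM (ν.map s)).analyticAt _).comp (hg.fun_comp_of_eq hscale rfl))
  refine hvalue.congr ?_
  filter_upwards [hscale.continuousAt.eventually hfg, Ioi_mem_nhds hε₀] with ε h hε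
  rw [h.entCost_comp_eq hr hs hε, EReal.toReal_coe, expectationCLM_apply, expectationCLM_apply]

end Analyticity

section Supports

variable {α : Type*} [MeasurableSpace α]

lemma msupport_eq_support [TopologicalSpace α] (μ : Measure α) : msupport μ = μ.support := by
  simp only [Measure.support_eq_forall_isOpen, pos_iff_ne_zero]
  exact Set.ext fun x => forall_congr' fun U => forall_comm

lemma ae_mem_msupport [TopologicalSpace α] [HereditarilyLindelofSpace α] (μ : Measure α) :
    ∀ᵐ x ∂μ, x ∈ msupport μ := by
  rw [msupport_eq_support]
  exact Measure.support_mem_ae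

lemma exists_measurable_retraction {s : Set α} (hs : MeasurableSet s) (hne : s.Nonempty) :
    ∃ r : α → s, Measurable r ∧ ∀ x : s, r x = x := by
  obtain ⟨r, hr, h⟩ := (MeasurableEmbedding.subtype_coe hs).exists_measurable_extend
    measurable_id fun _ => hne.to_subtype
  exact ⟨r, hr, congrFun h⟩

lemma exists_measurable_retraction_msupport [TopologicalSpace α] [OpensMeasurableSpace α]
    [HereditarilyLindelofSpace α] (μ : Measure α) [NeZero μ] :
    ∃ r : α → msupport μ, Measurable r ∧ ∀ x : msupport μ, r x = x := by
  rw [msupport_eq_support]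
  exact exists_measurable_retraction μ.isClosed_support.measurableSet
    (Measure.nonempty_support (NeZero.ne μ))

end Supports

theorem entCost_analyticOnNhd_general {α β : Type*}
    [TopologicalSpace α] [SecondCountableTopology α] [MeasurableSpace α] [OpensMeasurableSpace α]
    [TopologicalSpace β] [SecondCountableTopology β] [MeasurableSpace β] [OpensMeasurableSpace β]
    (μ : Measure α) (ν : Measure β) [IsProbabilityMeasure μ] [IsProbabilityMeasure ν]
    (hμ : IsCompact (msupport μ)) (hν : IsCompact (msupport ν)) (c : α × β → ℝ)
    (hc : ContinuousOn c (msupport μ ×ˢ msupport ν)) :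
    AnalyticOnNhd ℝ (fun ε : ℝ => (entCost μ ν c ε).toReal) (Set.Ioi 0) := by
  have := isCompact_iff_compactSpace.1 hμ
  have := isCompact_iff_compactSpace.1 hν
  obtain ⟨r, hr, hrx⟩ := exists_measurable_retraction_msupport μ
  obtain ⟨s, hs, hsy⟩ := exists_measurable_retraction_msupport ν
  let c' : C(msupport μ × msupport ν, ℝ) := ⟨fun z => c (z.1, z.2),
    hc.comp_continuous (by fun_prop) fun z => ⟨z.1.2, z.2.2⟩⟩
  have hcongr : EqOn c (c' ∘ Prod.map r s) (msupport μ ×ˢ msupport ν) := by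
    rintro ⟨x, y⟩ ⟨hx, hy⟩
    simp [c', hrx ⟨x, hx⟩, hsy ⟨y, hy⟩]
  have hcost (ε : ℝ) : entCost μ ν c ε = entCost μ ν (c' ∘ Prod.map r s) ε :=
    entCost_congr (ae_mem_msupport μ) (ae_mem_msupport ν) hcongr ε
  simp only [hcost]
  exact fun ε₀ hε₀ => analyticAt_toReal_entCost hr hs c' hε₀

/-- The entropic cost `ε ↦ v_ε` is real-analytic on `(0,∞)`. -/
theorem entCost_analyticOnNhd {d : ℕ}
    (μm μp : Measure (EuclideanSpace ℝ (Fin d)))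
    [IsProbabilityMeasure μm] [IsProbabilityMeasure μp]
    (hXm : IsCompact (msupport μm)) (hXp : IsCompact (msupport μp))
    (c : EuclideanSpace ℝ (Fin d) × EuclideanSpace ℝ (Fin d) → ℝ)
    (hc : ContinuousOn c (msupport μm ×ˢ msupport μp)) :
    AnalyticOnNhd ℝ (fun ε : ℝ => (entCost μm μp c ε).toReal) (Set.Ioi 0) :=
  entCost_analyticOnNhd_general μm μp hXm hXp c hc
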